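/- Let (R,m) be a Noetherian local ring, let a,b be an R-regular sequence and let p ≥ 5 be an odd integer. Set x_1 = a^p, x_2 = b^p, y = a^2 b^{p-2}, J = (x_1,x_2) and I = (x_1,x_2,y). Then: (i) (JI^n : y^{n+1}) = (a^{p-2n-2}, b^2) for 1 ≤ n ≤ (p−3)/2, (JI^n : y^{n+1}) = (a,b) for (p−1)/2 ≤ n ≤ p−2, and (JI^n : y^{n+1}) = R for n ≥ p−1; in particular J is a reduction of I with reduction number r_J(I) = p−1. (ii) ((x_1 I^{n-1} : x_2) ∩ I^{n-1})/(x_1 I^{n-2}) = 0 for all n ≥ 2. (iii) rt(I) = p. -/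

import Mathlib

open MvPolynomial

section Defs

variable {R : Type*} [CommRing R]

/-- The presentation of the Rees algebra of the ideal generated by `g`,
sending the `i`-th variable to `(g i) · t` inside `R[t]`. -/
noncomputable def reesPres {m : ℕ} (g : Fin m → R) :
    MvPolynomial (Fin m) R →ₐ[R] Polynomial R :=
  aeval fun i => Polynomial.C (g i) * Polynomial.X

/-- `Q`, the ideal of equations of the Rees algebra w.r.t. the generators `g`. -/
noncomputable def presKer {m : ℕ} (g : Fin m → R) : Ideal (MvPolynomial (Fin m) R) :=
  RingHom.ker (reesPres g)

/-- `Q⟨d⟩`, the subideal of `Q` generated by the homogeneous equations of degree at most `d`. -/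
noncomputable def presKerLe {m : ℕ} (g : Fin m → R) (d : ℕ) : Ideal (MvPolynomial (Fin m) R) :=
  Ideal.span {F | F ∈ presKer g ∧ ∃ k ≤ d, F.IsHomogeneous k}

end Defs

/-!
Every ideal involved is generated by monomials in `a, b`, and for a regular sequence such monomials
behave as in a polynomial ring: `r * a ^ u * b ^ v ∈ (a ^ (u + g), b ^ (v + k))` forces
`r ∈ (a ^ g, b ^ k)`. More generally take `x₁ = a ^ (c + d)`, `x₂ = b ^ (c + d)` and
`y = a ^ c * b ^ d` with `c, d` coprime, the theorem being `c = 2`, `d = p - 2`. The colon ideals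
and the reduction number are then read off from the exponents of the monomials
`x₁ ^ i * x₂ ^ j * y ^ k`.

The equations of the Rees algebra are generated by the binomials `a ^ D * X ^ s - b ^ D * X ^ t`.
In degree `> c + d` any such binomial splits, through an intermediate exponent sharing a variable
with `s` and with `t`, into multiples of binomials of smaller degree, so `rt(I) ≤ c + d`. In degree
`< c + d` distinct monomials in `x₁, x₂, y` have distinct exponents, so every equation has its
coefficients in `(a, b)`, whereas `Y ^ (c + d) - X₁ ^ c * X₂ ^ d` does not.
-/

section RegularPair

open RingTheory.Sequence

variable {R : Type*} [CommRing R] {a b : R}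

lemma isLeftRegular_of_isWeaklyRegular_pair (h : IsWeaklyRegular R [a, b]) : IsLeftRegular a :=
  ((isWeaklyRegular_cons_iff R a [b]).mp h).1.isLeftRegular

lemma dvd_of_dvd_mul_of_isWeaklyRegular_pair (h : IsWeaklyRegular R [a, b]) {c : R}
    (hc : a ∣ c * b) : a ∣ c := by
  have hb := h.regular_mod_prev 1 (by simp)
  rw [isSMulRegular_quotient_iff_mem_of_smul_mem] at hb
  simpa [Ideal.mem_span_singleton] using
    hb c (by simpa [Ideal.mem_span_singleton, mul_comm] using hc)

lemma span_pair_ne_top_of_isRegular (h : IsRegular R [a, b]) : Ideal.span {a, b} ≠ ⊤ := by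
  have hne := h.top_ne_smul.symm
  rwa [Ideal.ofList_cons, Ideal.ofList_singleton, ← Ideal.span_insert, smul_eq_mul,
    Ideal.mul_top] at hne

lemma dvd_of_dvd_mul_pow (h : IsWeaklyRegular R [a, b]) {c : R} {v : ℕ} (hc : a ∣ c * b ^ v) :
    a ∣ c := by
  induction v with
  | zero => simpa using hc
  | succ v ih =>
    exact ih (dvd_of_dvd_mul_of_isWeaklyRegular_pair h (by rwa [mul_assoc, ← pow_succ]))

lemma pow_dvd_of_pow_dvd_mul_pow (h : IsWeaklyRegular R [a, b]) {c : R} {u v : ℕ}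
    (hc : a ^ u ∣ c * b ^ v) : a ^ u ∣ c := by
  induction u generalizing c with
  | zero => simp
  | succ u ih =>
    obtain ⟨c, rfl⟩ := dvd_of_dvd_mul_pow h ((dvd_pow_self a u.succ_ne_zero).trans hc)
    rw [pow_succ', mul_assoc] at hc
    rw [pow_succ']
    exact mul_dvd_mul_left a
      (ih ((isLeftRegular_of_isWeaklyRegular_pair h).dvd_cancel_left.mp hc))

lemma pow_dvd_of_pow_add_dvd_mul (h : IsWeaklyRegular R [a, b]) {c : R} {u v g : ℕ}
    (hc : a ^ (u + g) ∣ c * (a ^ u * b ^ v)) : a ^ g ∣ c := by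
  rw [pow_add, mul_left_comm] at hc
  exact pow_dvd_of_pow_dvd_mul_pow h
    (((isLeftRegular_of_isWeaklyRegular_pair h).pow u).dvd_cancel_left.mp hc)

lemma mem_span_pow_pair_of_mul_mem (h : IsWeaklyRegular R [a, b]) {c : R} {u v g k : ℕ}
    (hc : c * (a ^ u * b ^ v) ∈ Ideal.span {a ^ (u + g), b ^ (v + k)}) :
    c ∈ Ideal.span {a ^ g, b ^ k} := by
  obtain ⟨r, s, hrs⟩ := Ideal.mem_span_pair.mp hc
  obtain ⟨s, rfl⟩ : a ^ u ∣ s := pow_dvd_of_pow_dvd_mul_pow h (v := v + k)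
    ⟨c * b ^ v - r * a ^ g, by linear_combination hrs⟩
  obtain ⟨r', hr'⟩ : a ^ g ∣ c - s * b ^ k := pow_dvd_of_pow_add_dvd_mul h (u := u) (v := v)
    ⟨r, by linear_combination -hrs⟩
  exact Ideal.mem_span_pair.mpr ⟨r', s, by linear_combination -hr'⟩

end RegularPair

section MonomialIdeal

open Pointwise

variable {R : Type*} [CommRing R] {a b : R} {S T : Set (ℕ × ℕ)}

/-- The ideal generated by the monomials `a ^ u * b ^ v` with `(u, v) ∈ S`. -/
def monomialIdeal (a b : R) (S : Set (ℕ × ℕ)) : Ideal R :=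
  Ideal.span ((fun q ↦ a ^ q.1 * b ^ q.2) '' S)

lemma monomialIdeal_le_iff {K : Ideal R} :
    monomialIdeal a b S ≤ K ↔ ∀ q ∈ S, a ^ q.1 * b ^ q.2 ∈ K := by
  rw [monomialIdeal, Ideal.span_le, Set.image_subset_iff]
  rfl

lemma pow_mul_pow_mem_monomialIdeal {q : ℕ × ℕ} (hq : q ∈ S) {u v : ℕ} (hu : q.1 ≤ u)
    (hv : q.2 ≤ v) : a ^ u * b ^ v ∈ monomialIdeal a b S :=
  Ideal.mem_of_dvd _ (mul_dvd_mul (pow_dvd_pow a hu) (pow_dvd_pow b hv))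
    (Ideal.subset_span (Set.mem_image_of_mem _ hq))

lemma monomialIdeal_mono (h : S ⊆ T) : monomialIdeal a b S ≤ monomialIdeal a b T :=
  Ideal.span_mono (Set.image_mono h)

lemma monomialIdeal_mul (a b : R) (S T : Set (ℕ × ℕ)) :
    monomialIdeal a b S * monomialIdeal a b T = monomialIdeal a b (S + T) := by
  rw [monomialIdeal, monomialIdeal, monomialIdeal, Ideal.span_mul_span', ← Set.image2_mul,
    ← Set.image2_add, Set.image2_image_left, Set.image2_image_right, Set.image_image2]
  congr 1
  exact Set.image2_congr fun q _ q' _ ↦ by simp only [Prod.fst_add, Prod.snd_add]; ring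

lemma colon_monomialIdeal_le (h : RingTheory.Sequence.IsWeaklyRegular R [a, b]) {u v g k : ℕ}
    (hS : ∀ q ∈ S, u + g ≤ q.1 ∨ v + k ≤ q.2) :
    (monomialIdeal a b S).colon (Ideal.span {a ^ u * b ^ v}) ≤ Ideal.span {a ^ g, b ^ k} := by
  intro c hc
  refine mem_span_pow_pair_of_mul_mem h (u := u) (v := v) ?_
  refine monomialIdeal_le_iff.mpr (fun q hq ↦ ?_) (Ideal.mem_colon_span_singleton.mp hc)
  rcases hS q hq with hu | hv
  · exact Ideal.mul_mem_right _ _ (Ideal.mem_of_dvd _ (pow_dvd_pow a hu)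
      (Ideal.subset_span (Set.mem_insert _ _)))
  · exact Ideal.mul_mem_left _ _ (Ideal.mem_of_dvd _ (pow_dvd_pow b hv)
      (Ideal.subset_span (Set.mem_insert_of_mem _ rfl)))

lemma span_pow_pair_le_colon_monomialIdeal {u v g k : ℕ} {q q' : ℕ × ℕ} (hq : q ∈ S)
    (hqu : q.1 ≤ u + g) (hqv : q.2 ≤ v) (hq' : q' ∈ S) (hqu' : q'.1 ≤ u) (hqv' : q'.2 ≤ v + k) :
    Ideal.span {a ^ g, b ^ k} ≤ (monomialIdeal a b S).colon (Ideal.span {a ^ u * b ^ v}) := by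
  rw [Ideal.span_le, Set.pair_subset_iff]
  refine ⟨Ideal.mem_colon_span_singleton.mpr ?_, Ideal.mem_colon_span_singleton.mpr ?_⟩
  · convert pow_mul_pow_mem_monomialIdeal (a := a) (b := b) hq hqu hqv using 1
    ring
  · convert pow_mul_pow_mem_monomialIdeal (a := a) (b := b) hq' hqu' hqv' using 1
    ring

lemma mem_monomialIdeal_image_max_of_le (h : RingTheory.Sequence.IsWeaklyRegular R [a, b])
    {M : ℕ} {z : R} (hS : ∀ q ∈ S, M ≤ q.1) (hz : z ∈ monomialIdeal a b S)
    (hdvd : a ^ (M + 1) ∣ z) :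
    z ∈ monomialIdeal a b ((fun q ↦ (max q.1 (M + 1), q.2)) '' S) := by
  set T := (fun q : ℕ × ℕ ↦ (max q.1 (M + 1), q.2)) '' S
  have memT {q} (hq : q ∈ S) (hlt : M + 1 ≤ q.1) : q ∈ T :=
    ⟨q, hq, Prod.ext (max_eq_left hlt) rfl⟩
  by_cases hM : ∃ v, (M, v) ∈ S
  · classical
    set v₀ := Nat.find hM
    have hle : monomialIdeal a b S ≤ Ideal.span {a ^ M * b ^ v₀} ⊔ monomialIdeal a b T := by
      refine monomialIdeal_le_iff.mpr fun ⟨u, v⟩ hq ↦ ?_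
      rcases (hS _ hq).eq_or_lt with rfl | hlt
      · exact Ideal.mem_sup_left (Ideal.mem_span_singleton.mpr
          (mul_dvd_mul_left _ (pow_dvd_pow b (Nat.find_min' hM hq))))
      · exact Ideal.mem_sup_right (pow_mul_pow_mem_monomialIdeal (memT hq hlt) le_rfl le_rfl)
    have hT : monomialIdeal a b T ≤ Ideal.span {a ^ (M + 1)} := by
      refine monomialIdeal_le_iff.mpr ?_
      rintro _ ⟨q, -, rfl⟩
      exact Ideal.mem_span_singleton.mpr ((pow_dvd_pow a (le_max_right _ _)).mul_right _)
    obtain ⟨_, hx, w, hw, rfl⟩ := Submodule.mem_sup.mp (hle hz)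
    obtain ⟨c, rfl⟩ := Ideal.mem_span_singleton'.mp hx
    obtain ⟨c, rfl⟩ : a ∣ c := by
      rw [← pow_one a]
      exact pow_dvd_of_pow_add_dvd_mul h
        ((dvd_add_left (Ideal.mem_span_singleton.mp (hT hw))).mp hdvd)
    refine add_mem ?_ hw
    have hmem : a ^ (M + 1) * b ^ v₀ ∈ monomialIdeal a b T :=
      pow_mul_pow_mem_monomialIdeal (Set.mem_image_of_mem _ (Nat.find_spec hM)) (by simp) le_rfl
    convert Ideal.mul_mem_left _ c hmem using 1
    ring
  · refine monomialIdeal_mono (fun q hq ↦ memT hq ((hS q hq).lt_of_ne ?_)) hz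
    rintro rfl
    exact hM ⟨q.2, hq⟩

lemma mem_monomialIdeal_image_max (h : RingTheory.Sequence.IsWeaklyRegular R [a, b])
    {M : ℕ} {z : R} (hz : z ∈ monomialIdeal a b S) (hdvd : a ^ M ∣ z) :
    z ∈ monomialIdeal a b ((fun q ↦ (max q.1 M, q.2)) '' S) := by
  induction M with
  | zero => simpa using hz
  | succ M ih =>
    have hstep := mem_monomialIdeal_image_max_of_le h
      (Set.forall_mem_image.mpr fun _ _ ↦ le_max_right _ _)
      (ih ((pow_dvd_pow a M.le_succ).trans hdvd)) hdvd
    simpa only [Set.image_image, max_assoc, max_eq_right M.le_succ] using hstep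

end MonomialIdeal

section ThreeGenerated

open Pointwise
open RingTheory.Sequence (IsWeaklyRegular IsRegular)

variable {R : Type*} [CommRing R] {a b : R} {c d n : ℕ}

/-- The pair `(u, v)` such that `x₁ ^ i * x₂ ^ j * y ^ k = a ^ u * b ^ v` for
`x₁ = a ^ (c + d)`, `x₂ = b ^ (c + d)` and `y = a ^ c * b ^ d`. -/
def exponent (c d i j k : ℕ) : ℕ × ℕ := ((c + d) * i + c * k, (c + d) * j + d * k)

lemma pow_mul_pow_pow_eq (a b : R) (c d n : ℕ) :
    (a ^ c * b ^ d) ^ n = a ^ (c * n) * b ^ (d * n) := by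
  rw [mul_pow, ← pow_mul, ← pow_mul]

lemma exponent_add (c d i j k i' j' k' : ℕ) :
    exponent c d i j k + exponent c d i' j' k' = exponent c d (i + i') (j + j') (k + k') := by
  ext <;> simp only [exponent, Prod.fst_add, Prod.snd_add] <;> ring

lemma span_fst_eq_monomialIdeal (a b : R) (c d : ℕ) :
    Ideal.span {a ^ (c + d)} = monomialIdeal a b {exponent c d 1 0 0} := by
  simp [monomialIdeal, exponent]

lemma span_pair_eq_monomialIdeal (a b : R) (c d : ℕ) :
    Ideal.span {a ^ (c + d), b ^ (c + d)}
      = monomialIdeal a b {exponent c d 1 0 0, exponent c d 0 1 0} := by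
  simp [monomialIdeal, exponent, Set.image_pair]

lemma span_triple_eq_monomialIdeal (a b : R) (c d : ℕ) :
    Ideal.span {a ^ (c + d), b ^ (c + d), a ^ c * b ^ d}
      = monomialIdeal a b {exponent c d 1 0 0, exponent c d 0 1 0, exponent c d 0 0 1} := by
  simp [monomialIdeal, exponent, Set.image_insert_eq]

lemma span_triple_pow_eq_monomialIdeal (a b : R) (c d n : ℕ) :
    Ideal.span {a ^ (c + d), b ^ (c + d), a ^ c * b ^ d} ^ n
      = monomialIdeal a b {q | ∃ i j k, i + j + k = n ∧ exponent c d i j k = q} := by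
  induction n with
  | zero =>
    simp [monomialIdeal, exponent]
  | succ n ih =>
    rw [pow_succ', ih, span_triple_eq_monomialIdeal, monomialIdeal_mul]
    congr 1
    ext q
    constructor
    · rintro ⟨_, rfl | rfl | rfl, _, ⟨i, j, k, hn, rfl⟩, rfl⟩
      · exact ⟨1 + i, j, k, by omega, by simp [exponent_add]⟩
      · exact ⟨i, 1 + j, k, by omega, by simp [exponent_add]⟩
      · exact ⟨i, j, 1 + k, by omega, by simp [exponent_add]⟩
    · rintro ⟨i, j, k, hn, rfl⟩
      obtain hi | hj | hk : 1 ≤ i ∨ 1 ≤ j ∨ 1 ≤ k := by omega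
      · obtain ⟨i, rfl⟩ := Nat.exists_eq_add_of_le hi
        exact ⟨_, .inl rfl, _, ⟨i, j, k, by omega, rfl⟩, by simp [exponent_add]⟩
      · obtain ⟨j, rfl⟩ := Nat.exists_eq_add_of_le hj
        exact ⟨_, .inr (.inl rfl), _, ⟨i, j, k, by omega, rfl⟩, by simp [exponent_add]⟩
      · obtain ⟨k, rfl⟩ := Nat.exists_eq_add_of_le hk
        exact ⟨_, .inr (.inr rfl), _, ⟨i, j, k, by omega, rfl⟩, by simp [exponent_add]⟩

lemma span_pair_mul_span_triple_pow_eq_monomialIdeal (a b : R) (c d n : ℕ) :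
    Ideal.span {a ^ (c + d), b ^ (c + d)}
        * Ideal.span {a ^ (c + d), b ^ (c + d), a ^ c * b ^ d} ^ n
      = monomialIdeal a b
          {q | ∃ i j k, i + j + k = n + 1 ∧ 0 < i + j ∧ exponent c d i j k = q} := by
  rw [span_triple_pow_eq_monomialIdeal, span_pair_eq_monomialIdeal, monomialIdeal_mul]
  congr 1
  ext q
  constructor
  · rintro ⟨_, rfl | rfl, _, ⟨i, j, k, hn, rfl⟩, rfl⟩
    · exact ⟨1 + i, j, k, by omega, by omega, by simp [exponent_add]⟩
    · exact ⟨i, 1 + j, k, by omega, by omega, by simp [exponent_add]⟩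
  · rintro ⟨i, j, k, hn, hij, rfl⟩
    obtain hi | hj : 1 ≤ i ∨ 1 ≤ j := by omega
    · obtain ⟨i, rfl⟩ := Nat.exists_eq_add_of_le hi
      exact ⟨_, .inl rfl, _, ⟨i, j, k, by omega, rfl⟩, by simp [exponent_add]⟩
    · obtain ⟨j, rfl⟩ := Nat.exists_eq_add_of_le hj
      exact ⟨_, .inr rfl, _, ⟨i, j, k, by omega, rfl⟩, by simp [exponent_add]⟩

lemma span_fst_mul_span_triple_pow_eq_monomialIdeal (a b : R) (c d n : ℕ) :
    Ideal.span {a ^ (c + d)} * Ideal.span {a ^ (c + d), b ^ (c + d), a ^ c * b ^ d} ^ n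
      = monomialIdeal a b {q | ∃ i j k, i + j + k = n ∧ exponent c d (1 + i) j k = q} := by
  rw [span_triple_pow_eq_monomialIdeal, span_fst_eq_monomialIdeal, monomialIdeal_mul]
  congr 1
  ext q
  constructor
  · rintro ⟨_, rfl, _, ⟨i, j, k, hn, rfl⟩, rfl⟩
    exact ⟨i, j, k, hn, by simp [exponent_add]⟩
  · rintro ⟨i, j, k, hn, rfl⟩
    exact ⟨_, rfl, _, ⟨i, j, k, hn, rfl⟩, by simp [exponent_add]⟩

lemma colon_pow_eq_span_pow_pair (h : IsWeaklyRegular R [a, b]) (hn : c * n ≤ d) :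
    (Ideal.span {a ^ (c + d), b ^ (c + d)}
        * Ideal.span {a ^ (c + d), b ^ (c + d), a ^ c * b ^ d} ^ n).colon
          (Ideal.span {(a ^ c * b ^ d) ^ (n + 1)})
      = Ideal.span {a ^ (d - c * n), b ^ c} := by
  have hsum : c * (n + 1) + (d - c * n) = c + d := by rw [mul_add_one]; omega
  rw [span_pair_mul_span_triple_pow_eq_monomialIdeal, pow_mul_pow_pow_eq]
  refine le_antisymm (colon_monomialIdeal_le h ?_) ?_
  · rintro _ ⟨i, j, k, hs, hij, rfl⟩
    simp only [exponent, ← hs]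
    rcases Nat.eq_zero_or_pos i with rfl | hi
    · exact .inr (by nlinarith)
    · exact .inl (by nlinarith)
  · refine span_pow_pair_le_colon_monomialIdeal
      (q := exponent c d 1 n 0) ⟨1, n, 0, by omega, by omega, rfl⟩ ?_ ?_
      (q' := exponent c d 0 1 n) ⟨0, 1, n, by omega, by omega, rfl⟩ ?_ ?_ <;>
    simp only [exponent, hsum] <;> linarith

lemma colon_pow_le_span_pair (h : IsWeaklyRegular R [a, b]) (hcd : c.Coprime d)
    (hn : n + 1 < c + d) :
    (Ideal.span {a ^ (c + d), b ^ (c + d)}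
        * Ideal.span {a ^ (c + d), b ^ (c + d), a ^ c * b ^ d} ^ n).colon
          (Ideal.span {(a ^ c * b ^ d) ^ (n + 1)}) ≤ Ideal.span {a, b} := by
  suffices hgap : ∀ q ∈ {q | ∃ i j k, i + j + k = n + 1 ∧ 0 < i + j ∧ exponent c d i j k = q},
      c * (n + 1) + 1 ≤ q.1 ∨ d * (n + 1) + 1 ≤ q.2 by
    rw [span_pair_mul_span_triple_pow_eq_monomialIdeal, pow_mul_pow_pow_eq]
    simpa only [pow_one] using colon_monomialIdeal_le h hgap
  rintro _ ⟨i, j, k, hs, hij, rfl⟩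
  have hc : c ≠ 0 := by rintro rfl; rw [Nat.coprime_zero_left] at hcd; omega
  have hd : d ≠ 0 := by rintro rfl; rw [Nat.coprime_zero_right] at hcd; omega
  simp only [exponent, ← hs]
  by_contra! hlt
  have heq : d * i = c * j := by linarith [hlt.1, hlt.2]
  have hi : 0 < i := Nat.pos_of_ne_zero (by rintro rfl; simp_all)
  have hj : 0 < j := Nat.pos_of_ne_zero (by rintro rfl; simp_all)
  have hci : c ≤ i := Nat.le_of_dvd hi (hcd.dvd_of_dvd_mul_left ⟨j, heq⟩)
  have hdj : d ≤ j := Nat.le_of_dvd hj (hcd.symm.dvd_of_dvd_mul_left ⟨i, heq.symm⟩)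
  omega

lemma span_pair_le_colon_pow {i j i' j' : ℕ} (hij : d * i = c * j + 1) (hle : i + j ≤ n + 1)
    (hij' : c * j' = d * i' + 1) (hle' : i' + j' ≤ n + 1) :
    Ideal.span {a, b} ≤
      (Ideal.span {a ^ (c + d), b ^ (c + d)}
        * Ideal.span {a ^ (c + d), b ^ (c + d), a ^ c * b ^ d} ^ n).colon
          (Ideal.span {(a ^ c * b ^ d) ^ (n + 1)}) := by
  have hi : 0 < i := Nat.pos_of_ne_zero (by rintro rfl; omega)
  have hj' : 0 < j' := Nat.pos_of_ne_zero (by rintro rfl; omega)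
  obtain ⟨k, hk⟩ := Nat.exists_eq_add_of_le hle
  obtain ⟨k', hk'⟩ := Nat.exists_eq_add_of_le hle'
  rw [span_pair_mul_span_triple_pow_eq_monomialIdeal, pow_mul_pow_pow_eq]
  have hle_colon := span_pow_pair_le_colon_monomialIdeal (a := a) (b := b)
    (S := {q | ∃ i j k, i + j + k = n + 1 ∧ 0 < i + j ∧ exponent c d i j k = q})
    (u := c * (n + 1)) (v := d * (n + 1)) (g := 1) (k := 1)
    (q := exponent c d i j k) ⟨i, j, k, hk.symm, by omega, rfl⟩
    (by simp only [exponent, hk]; linarith) (by simp only [exponent, hk]; linarith)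
    (q' := exponent c d i' j' k') ⟨i', j', k', hk'.symm, by omega, rfl⟩
    (by simp only [exponent, hk']; linarith) (by simp only [exponent, hk']; linarith)
  simpa only [pow_one] using hle_colon

lemma pow_mem_span_pair_mul_span_triple_pow (hpos : 0 < c + d) (hn : c + d ≤ n + 1) :
    (a ^ c * b ^ d) ^ (n + 1) ∈ Ideal.span {a ^ (c + d), b ^ (c + d)}
        * Ideal.span {a ^ (c + d), b ^ (c + d), a ^ c * b ^ d} ^ n := by
  obtain ⟨k, hk⟩ := Nat.exists_eq_add_of_le hn
  rw [span_pair_mul_span_triple_pow_eq_monomialIdeal, pow_mul_pow_pow_eq, hk]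
  refine pow_mul_pow_mem_monomialIdeal (q := exponent c d c d k) ?_ ?_ ?_
  · exact ⟨c, d, k, rfl, hpos, rfl⟩
  all_goals simp only [exponent]; linarith

lemma span_triple_pow_succ_eq (hpos : 0 < c + d) (hn : c + d ≤ n + 1) :
    Ideal.span {a ^ (c + d), b ^ (c + d), a ^ c * b ^ d} ^ (n + 1)
      = Ideal.span {a ^ (c + d), b ^ (c + d)}
        * Ideal.span {a ^ (c + d), b ^ (c + d), a ^ c * b ^ d} ^ n := by
  refine le_antisymm ?_ ?_
  · rw [span_triple_pow_eq_monomialIdeal, monomialIdeal_le_iff]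
    rintro _ ⟨i, j, k, hs, rfl⟩
    rcases Nat.eq_zero_or_pos (i + j) with hij | hij
    · obtain ⟨rfl, rfl⟩ : i = 0 ∧ j = 0 := by omega
      obtain rfl : k = n + 1 := by omega
      simpa [exponent, pow_mul_pow_pow_eq] using
        pow_mem_span_pair_mul_span_triple_pow (a := a) (b := b) hpos hn
    · rw [span_pair_mul_span_triple_pow_eq_monomialIdeal]
      refine pow_mul_pow_mem_monomialIdeal ?_ le_rfl le_rfl
      exact ⟨i, j, k, hs, hij, rfl⟩
  · rw [pow_succ']
    exact Ideal.mul_mono_left (Ideal.span_mono (by grind))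

lemma isLeast_reductionNumber (h : IsRegular R [a, b]) (hcd : c.Coprime d) :
    IsLeast {k : ℕ | Ideal.span {a ^ (c + d), b ^ (c + d), a ^ c * b ^ d} ^ (k + 1)
      = Ideal.span {a ^ (c + d), b ^ (c + d)}
        * Ideal.span {a ^ (c + d), b ^ (c + d), a ^ c * b ^ d} ^ k} (c + d - 1) := by
  have hpos : 0 < c + d := by
    by_contra! hle
    obtain ⟨rfl, rfl⟩ : c = 0 ∧ d = 0 := by omega
    simp at hcd
  refine ⟨span_triple_pow_succ_eq hpos (by omega), fun k hk ↦ ?_⟩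
  by_contra! hlt
  apply span_pair_ne_top_of_isRegular h
  rw [Ideal.eq_top_iff_one]
  refine colon_pow_le_span_pair h.toIsWeaklyRegular hcd (n := k) (by omega) ?_
  rw [Ideal.mem_colon_span_singleton, one_mul, ← hk.out]
  exact Ideal.pow_mem_pow (Ideal.subset_span (by simp)) _

lemma span_fst_mul_span_triple_pow_succ_le (a b : R) (c d n : ℕ) :
    Ideal.span {a ^ (c + d)} * Ideal.span {a ^ (c + d), b ^ (c + d), a ^ c * b ^ d} ^ (n + 1)
      ≤ Ideal.span {a ^ (c + d)} * Ideal.span {a ^ (c + d), b ^ (c + d), a ^ c * b ^ d} ^ n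
          * Ideal.span {b ^ (c + d)} ⊔ Ideal.span {a ^ (c + d + c * (n + 1))} := by
  rw [span_fst_mul_span_triple_pow_eq_monomialIdeal, monomialIdeal_le_iff,
    span_fst_mul_span_triple_pow_eq_monomialIdeal]
  rintro _ ⟨i, j, k, hn, rfl⟩
  rcases j with _ | j
  · refine Ideal.mem_sup_right (Ideal.mem_span_singleton.mpr (Dvd.dvd.mul_right ?_ _))
    exact pow_dvd_pow a (by simp only [exponent, ← hn]; nlinarith)
  · refine Ideal.mem_sup_left (Ideal.mem_mul_span_singleton.mpr ⟨_,
      pow_mul_pow_mem_monomialIdeal (q := exponent c d (1 + i) j k) ?_ le_rfl le_rfl, ?_⟩)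
    · exact ⟨i, j, k, by omega, rfl⟩
    · simp only [exponent]
      ring

lemma mem_span_fst_mul_span_triple_pow (h : IsWeaklyRegular R [a, b]) {z : R}
    (hz : z ∈ Ideal.span {a ^ (c + d), b ^ (c + d), a ^ c * b ^ d} ^ (n + 1))
    (hdvd : a ^ (c + d + c * (n + 1)) ∣ z) :
    z ∈ Ideal.span {a ^ (c + d)}
      * Ideal.span {a ^ (c + d), b ^ (c + d), a ^ c * b ^ d} ^ n := by
  rw [span_triple_pow_eq_monomialIdeal] at hz
  rw [span_fst_mul_span_triple_pow_eq_monomialIdeal]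
  refine monomialIdeal_le_iff.mpr ?_ (mem_monomialIdeal_image_max h hz hdvd)
  rintro _ ⟨_, ⟨i, j, k, hs, rfl⟩, rfl⟩
  obtain ⟨i', j', k', hs', hle₁, hle₂⟩ : ∃ i' j' k', i' + j' + k' = n ∧
      (c + d) * (1 + i') + c * k' ≤ max ((c + d) * i + c * k) (c + d + c * (n + 1)) ∧
      (c + d) * j' + d * k' ≤ (c + d) * j + d * k := by
    simp only [le_max_iff]
    rcases i with _ | i
    · rcases k with _ | k
      · exact ⟨0, n, 0, by omega, .inr (by nlinarith), by nlinarith⟩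
      · exact ⟨0, j, k, by omega, .inr (by nlinarith), by nlinarith⟩
    · exact ⟨i, j, k, by omega, .inl (by linarith), le_rfl⟩
  refine pow_mul_pow_mem_monomialIdeal (q := exponent c d (1 + i') j' k') ?_ hle₁ hle₂
  exact ⟨i', j', k', hs', rfl⟩

lemma colon_inf_span_triple_pow_eq (h : IsWeaklyRegular R [a, b]) :
    (Ideal.span {a ^ (c + d)}
        * Ideal.span {a ^ (c + d), b ^ (c + d), a ^ c * b ^ d} ^ (n + 1)).colon
          (Ideal.span {b ^ (c + d)})
        ⊓ Ideal.span {a ^ (c + d), b ^ (c + d), a ^ c * b ^ d} ^ (n + 1)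
      = Ideal.span {a ^ (c + d)}
        * Ideal.span {a ^ (c + d), b ^ (c + d), a ^ c * b ^ d} ^ n := by
  set I := Ideal.span {a ^ (c + d), b ^ (c + d), a ^ c * b ^ d}
  have hle : Ideal.span {a ^ (c + d)} * I ^ n ≤ I ^ (n + 1) := by
    rw [pow_succ']
    exact Ideal.mul_mono_left (Ideal.span_mono (by simp))
  refine le_antisymm ?_ (le_inf (fun z hz ↦ ?_) hle)
  · rintro z ⟨hcolon, hz⟩
    obtain ⟨_, hx, w, hw, hsum⟩ := Submodule.mem_sup.mp
      (span_fst_mul_span_triple_pow_succ_le a b c d n (Ideal.mem_colon_span_singleton.mp hcolon))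
    obtain ⟨x, hx', rfl⟩ := Ideal.mem_mul_span_singleton.mp hx
    have hdvd : a ^ (c + d + c * (n + 1)) ∣ z - x := by
      refine pow_dvd_of_pow_dvd_mul_pow h (v := c + d) ?_
      rwa [sub_mul, ← hsum, add_sub_cancel_left, ← Ideal.mem_span_singleton]
    have hmem := mem_span_fst_mul_span_triple_pow h (sub_mem hz (hle hx')) hdvd
    simpa using add_mem hmem hx'
  · rw [Ideal.mem_colon_span_singleton, pow_succ, ← mul_assoc]
    exact Ideal.mul_mem_mul hz (Ideal.subset_span (by simp))

end ThreeGenerated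

section ReesKernel

variable {R : Type*} [CommRing R] {m n N : ℕ} {g : Fin m → R} {F : MvPolynomial (Fin m) R}

lemma coeff_reesPres (g : Fin m → R) (F : MvPolynomial (Fin m) R) (n : ℕ) :
    (reesPres g F).coeff n = eval g (homogeneousComponent n F) := by
  induction F using MvPolynomial.induction_on' with
  | monomial s r =>
    have hpres : reesPres g (monomial s r)
        = Polynomial.C (eval g (monomial s r)) * Polynomial.X ^ s.degree := by
      rw [reesPres, aeval_monomial, eval_monomial, Finsupp.prod_pow, Finsupp.prod_pow]
      simp only [mul_pow, Finset.prod_mul_distrib, Finset.prod_pow_eq_pow_sum,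
        Finsupp.degree_eq_sum, map_mul, map_prod, map_pow, Polynomial.algebraMap_apply,
        Algebra.algebraMap_self, RingHom.id_apply, mul_assoc]
    rw [hpres, Polynomial.coeff_C_mul_X_pow,
      homogeneousComponent_of_mem (isHomogeneous_monomial r rfl), apply_ite (eval g), map_zero]
  | add F G hF hG => simp only [map_add, Polynomial.coeff_add, hF, hG]

lemma mem_presKer_iff : F ∈ presKer g ↔ ∀ n, eval g (homogeneousComponent n F) = 0 := by
  simp only [presKer, RingHom.mem_ker, Polynomial.ext_iff, coeff_reesPres, Polynomial.coeff_zero]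

lemma mem_presKer_iff_of_isHomogeneous (hF : F.IsHomogeneous n) :
    F ∈ presKer g ↔ eval g F = 0 := by
  simp only [mem_presKer_iff, homogeneousComponent_of_mem hF, apply_ite (eval g), map_zero]
  simp

lemma mem_presKerLe_of_isHomogeneous (hF : F.IsHomogeneous n) (hn : n ≤ N) (h₀ : eval g F = 0) :
    F ∈ presKerLe g N :=
  Ideal.subset_span ⟨(mem_presKer_iff_of_isHomogeneous hF).mpr h₀, n, hn, hF⟩

lemma presKerLe_le_presKer (g : Fin m → R) (N : ℕ) : presKerLe g N ≤ presKer g :=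
  Ideal.span_le.mpr fun _ hF ↦ hF.1

end ReesKernel

section MonomialGenerators

open Finsupp (weight)
open RingTheory.Sequence (IsWeaklyRegular)

variable {R σ : Type*} [CommRing R] {a b : R} {e f : σ → ℕ} {p n : ℕ} {s t u : σ →₀ ℕ}
  {F : MvPolynomial σ R}

lemma weight_add_weight_eq_mul_degree (hef : ∀ i, e i + f i = p) (s : σ →₀ ℕ) :
    weight e s + weight f s = p * s.degree := by
  simp only [Finsupp.weight_apply, Finsupp.degree_apply, Finsupp.sum, ← Finset.sum_add_distrib,
    smul_eq_mul, ← mul_add, hef, ← Finset.sum_mul, mul_comm p]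

lemma weight_le_weight_single (hef : ∀ i, e i + f i = p) {i₀ : σ} (hi₀ : f i₀ = 0)
    (hs : s.degree = n) : weight e s ≤ weight e (Finsupp.single i₀ n) := by
  have hws := weight_add_weight_eq_mul_degree hef s
  have hw₀ := weight_add_weight_eq_mul_degree hef (Finsupp.single i₀ n)
  rw [Finsupp.weight_single f, hi₀, smul_zero, Finsupp.degree_single] at hw₀
  rw [hs] at hws
  omega

lemma eval_monomial_pow_mul_pow (a b : R) (e f : σ → ℕ) (s : σ →₀ ℕ) (r : R) :
    eval (fun i ↦ a ^ e i * b ^ f i) (monomial s r)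
      = r * (a ^ weight e s * b ^ weight f s) := by
  simp only [eval_monomial, Finsupp.weight_apply, Finsupp.prod, Finsupp.sum, mul_pow,
    Finset.prod_mul_distrib, ← pow_mul, Finset.prod_pow_eq_pow_sum, smul_eq_mul, mul_comm]

lemma eval_pow_mul_pow_eq_sum (a b : R) (e f : σ → ℕ) (F : MvPolynomial σ R) :
    eval (fun i ↦ a ^ e i * b ^ f i) F
      = ∑ t ∈ F.support, coeff t F * (a ^ weight e t * b ^ weight f t) := by
  conv_lhs => rw [F.as_sum, map_sum]
  simp only [eval_monomial_pow_mul_pow]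

lemma coeff_mul_mem_of_eval_eq_zero {K : Ideal R} (h₀ : eval (fun i ↦ a ^ e i * b ^ f i) F = 0)
    (hK : ∀ t ∈ F.support, t ≠ s → a ^ weight e t * b ^ weight f t ∈ K) :
    coeff s F * (a ^ weight e s * b ^ weight f s) ∈ K := by
  classical
  by_cases hs : s ∈ F.support
  · rw [eval_pow_mul_pow_eq_sum, ← Finset.add_sum_erase _ _ hs, add_eq_zero_iff_eq_neg] at h₀
    rw [h₀]
    refine neg_mem (sum_mem fun t ht ↦ Ideal.mul_mem_left _ _ ?_)
    exact hK t (Finset.mem_of_mem_erase ht) (Finset.ne_of_mem_erase ht)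
  · rw [notMem_support_iff.mp hs, zero_mul]
    exact zero_mem K

lemma pow_dvd_coeff_of_eval_eq_zero (h : IsWeaklyRegular R [a, b]) {D : ℕ}
    (h₀ : eval (fun i ↦ a ^ e i * b ^ f i) F = 0)
    (hD : ∀ t ∈ F.support, t ≠ s → weight e s + D ≤ weight e t) : a ^ D ∣ coeff s F := by
  refine pow_dvd_of_pow_add_dvd_mul h (u := weight e s) (v := weight f s) ?_
  rw [← Ideal.mem_span_singleton]
  refine coeff_mul_mem_of_eval_eq_zero h₀ fun t ht hts ↦ ?_
  exact Ideal.mem_span_singleton.mpr ((pow_dvd_pow a (hD t ht hts)).mul_right _)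

lemma coeff_mem_span_pair_of_eval_eq_zero (h : IsWeaklyRegular R [a, b])
    (hef : ∀ i, e i + f i = p) (hF : F.IsHomogeneous n)
    (hinj : Set.InjOn (weight e) {s | s.degree = n})
    (h₀ : eval (fun i ↦ a ^ e i * b ^ f i) F = 0) (s : σ →₀ ℕ) :
    coeff s F ∈ Ideal.span {a, b} := by
  by_cases hs : s.degree = n
  · suffices hmem : coeff s F * (a ^ weight e s * b ^ weight f s)
        ∈ Ideal.span {a ^ (weight e s + 1), b ^ (weight f s + 1)} by
      simpa only [pow_one] using mem_span_pow_pair_of_mul_mem h hmem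
    refine coeff_mul_mem_of_eval_eq_zero h₀ fun t ht hts ↦ ?_
    have htn : t.degree = n := by
      by_contra hne
      exact mem_support_iff.mp ht (hF.coeff_eq_zero hne)
    have hws := weight_add_weight_eq_mul_degree hef s
    have hwt := weight_add_weight_eq_mul_degree hef t
    rw [hs] at hws
    rw [htn] at hwt
    rcases (hinj.ne htn hs hts).lt_or_gt with hlt | hgt
    · exact Ideal.mul_mem_left _ _ (Ideal.mem_of_dvd _ (pow_dvd_pow b (by omega))
        (Ideal.subset_span (Set.mem_insert_of_mem _ rfl)))
    · exact Ideal.mul_mem_right _ _ (Ideal.mem_of_dvd _ (pow_dvd_pow a hgt)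
        (Ideal.subset_span (Set.mem_insert _ _)))
  · rw [hF.coeff_eq_zero hs]
    exact zero_mem _

/-- For exponent vectors `s`, `t` of equal degree with `weight e s ≤ weight e t`, the basic relation
`a ^ D * X ^ s - b ^ D * X ^ t` between generators `a ^ e i * b ^ f i` for which `e i + f i` is
constant. The subtraction `D = weight e t - weight e s` truncates in the opposite case. -/
noncomputable def reesBinomial (a b : R) (e : σ → ℕ) (s t : σ →₀ ℕ) : MvPolynomial σ R :=
  monomial s (a ^ (weight e t - weight e s)) - monomial t (b ^ (weight e t - weight e s))

lemma isHomogeneous_reesBinomial (hs : s.degree = n) (ht : t.degree = n) :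
    (reesBinomial a b e s t).IsHomogeneous n :=
  (isHomogeneous_monomial _ hs).sub (isHomogeneous_monomial _ ht)

lemma eval_reesBinomial (hef : ∀ i, e i + f i = p) (hst : s.degree = t.degree)
    (hle : weight e s ≤ weight e t) :
    eval (fun i ↦ a ^ e i * b ^ f i) (reesBinomial a b e s t) = 0 := by
  have hws := weight_add_weight_eq_mul_degree hef s
  have hwt := weight_add_weight_eq_mul_degree hef t
  obtain ⟨D, hD⟩ := Nat.exists_eq_add_of_le hle
  have hfs : weight f s = weight f t + D := by rw [hst] at hws; omega
  rw [reesBinomial, map_sub, eval_monomial_pow_mul_pow, eval_monomial_pow_mul_pow, hD, hfs,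
    Nat.add_sub_cancel_left]
  ring

lemma reesBinomial_eq_add (a b : R) (hsu : weight e s ≤ weight e u)
    (hut : weight e u ≤ weight e t) :
    reesBinomial a b e s t = C (a ^ (weight e t - weight e u)) * reesBinomial a b e s u
      + C (b ^ (weight e u - weight e s)) * reesBinomial a b e u t := by
  have hsum : weight e t - weight e s
      = (weight e t - weight e u) + (weight e u - weight e s) := by omega
  simp only [reesBinomial, hsum, mul_sub, C_mul_monomial, pow_add,
    mul_comm (b ^ (weight e u - weight e s))]
  abel

lemma reesBinomial_add_left (a b : R) (e : σ → ℕ) (r s t : σ →₀ ℕ) :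
    reesBinomial a b e (r + s) (r + t) = monomial r 1 * reesBinomial a b e s t := by
  simp only [reesBinomial, map_add, Nat.add_sub_add_left, mul_sub, monomial_mul, one_mul]

lemma exists_support_sub_reesBinomial_subset (h : IsWeaklyRegular R [a, b])
    [DecidableEq σ] {B : Finset (σ →₀ ℕ)} (hF : F.support ⊆ insert s B) (ht : t ∈ B)
    (hst : weight e s ≤ weight e t) (hmin : ∀ u ∈ B, weight e t ≤ weight e u)
    (h₀ : eval (fun i ↦ a ^ e i * b ^ f i) F = 0) :
    ∃ r : R, (F - C r * reesBinomial a b e s t).support ⊆ B := by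
  obtain ⟨r, hr⟩ : a ^ (weight e t - weight e s) ∣ coeff s F := by
    refine pow_dvd_coeff_of_eval_eq_zero h h₀ fun u hu hus ↦ ?_
    have := hmin u (Finset.mem_of_mem_insert_of_ne (hF hu) hus)
    omega
  refine ⟨r, fun u hu ↦ ?_⟩
  by_contra huB
  refine mem_support_iff.mp hu ?_
  have hut : t ≠ u := fun htu ↦ huB (htu ▸ ht)
  rw [coeff_sub, coeff_C_mul, reesBinomial, coeff_sub, coeff_monomial, coeff_monomial,
    if_neg hut]
  by_cases hus : s = u
  · rw [if_pos hus, ← hus, hr]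
    ring
  · have hcoeff : coeff u F = 0 :=
      notMem_support_iff.mp fun hu' ↦ huB (Finset.mem_of_mem_insert_of_ne (hF hu') (Ne.symm hus))
    rw [hcoeff, if_neg hus]
    ring

lemma eq_zero_of_support_subset_singleton (ha : IsLeftRegular a) {i₀ : σ} (hi₀ : f i₀ = 0)
    (hF : F.support ⊆ {Finsupp.single i₀ n}) (h₀ : eval (fun i ↦ a ^ e i * b ^ f i) F = 0) :
    F = 0 := by
  have hmem := coeff_mul_mem_of_eval_eq_zero (K := ⊥) (s := Finsupp.single i₀ n) h₀
    fun t ht hne ↦ absurd (Finset.mem_singleton.mp (hF ht)) hne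
  rw [Ideal.mem_bot, Finsupp.weight_single f, hi₀, smul_zero, pow_zero, mul_one] at hmem
  have hcoeff : coeff (Finsupp.single i₀ n) F = 0 :=
    (ha.pow _).mul_left_eq_zero_iff.mp (by rwa [mul_comm])
  rw [← support_eq_empty, Finset.eq_empty_iff_forall_notMem]
  intro t ht
  rw [Finset.mem_singleton.mp (hF ht)] at ht
  exact mem_support_iff.mp ht hcoeff

lemma mem_of_reesBinomial_mem_of_support_subset (h : IsWeaklyRegular R [a, b])
    (hef : ∀ i, e i + f i = p) {i₀ : σ} (hi₀ : f i₀ = 0) {Q : Ideal (MvPolynomial σ R)}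
    (hQ : ∀ s t : σ →₀ ℕ, s.degree = n → t.degree = n → weight e s ≤ weight e t →
      reesBinomial a b e s t ∈ Q) [DecidableEq σ] (A : Finset (σ →₀ ℕ)) :
    (∀ s ∈ A, s.degree = n) → ∀ F : MvPolynomial σ R,
      F.support ⊆ insert (Finsupp.single i₀ n) A →
      eval (fun i ↦ a ^ e i * b ^ f i) F = 0 → F ∈ Q := by
  set top := Finsupp.single i₀ n
  have htop : top.degree = n := Finsupp.degree_single _ _
  refine Finset.induction_on_min_value (weight e) A ?_ fun s A _ hmin ih hA F hF h₀ ↦ ?_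
  · intro _ F hF h₀
    rw [eq_zero_of_support_subset_singleton (isLeftRegular_of_isWeaklyRegular_pair h) hi₀ hF h₀]
    exact zero_mem Q
  · rw [Finset.forall_mem_insert] at hA
    rw [Finset.insert_comm] at hF
    obtain ⟨t, ht, htmin⟩ :=
      (insert top A).exists_min_image (weight e) (Finset.insert_nonempty _ _)
    have hdegree : ∀ u ∈ insert top A, u.degree = n := by
      rw [Finset.forall_mem_insert]
      exact ⟨htop, hA.2⟩
    have htn := hdegree t ht
    have hst : weight e s ≤ weight e t := by
      rcases Finset.mem_insert.mp ht with rfl | htA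
      · exact weight_le_weight_single hef hi₀ hA.1
      · exact hmin t htA
    obtain ⟨r, hr⟩ := exists_support_sub_reesBinomial_subset h hF ht hst htmin h₀
    have hsub : F - C r * reesBinomial a b e s t ∈ Q := by
      refine ih hA.2 _ hr ?_
      rw [map_sub, map_mul, h₀, eval_reesBinomial hef (hA.1.trans htn.symm) hst, mul_zero, sub_zero]
    exact (Submodule.sub_mem_iff_left Q (Ideal.mul_mem_left _ _ (hQ s t hA.1 htn hst))).mp hsub

lemma mem_of_reesBinomial_mem_of_isHomogeneous (h : IsWeaklyRegular R [a, b])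
    (hef : ∀ i, e i + f i = p) {i₀ : σ} (hi₀ : f i₀ = 0) {Q : Ideal (MvPolynomial σ R)}
    (hQ : ∀ s t : σ →₀ ℕ, s.degree = n → t.degree = n → weight e s ≤ weight e t →
      reesBinomial a b e s t ∈ Q)
    (hF : F.IsHomogeneous n) (h₀ : eval (fun i ↦ a ^ e i * b ^ f i) F = 0) : F ∈ Q := by
  classical
  refine mem_of_reesBinomial_mem_of_support_subset h hef hi₀ hQ F.support (fun s hs ↦ ?_) F
    (Finset.subset_insert _ _) h₀
  by_contra hne
  exact mem_support_iff.mp hs (hF.coeff_eq_zero hne)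

end MonomialGenerators

section RelationType

open Finsupp (weight)
open RingTheory.Sequence (IsWeaklyRegular IsRegular)

variable {R : Type*} [CommRing R] {a b : R} {m p N : ℕ} {e f : Fin m → ℕ}

lemma presKer_le_of_reesBinomial_mem (h : IsWeaklyRegular R [a, b]) (hef : ∀ i, e i + f i = p)
    {i₀ : Fin m} (hi₀ : f i₀ = 0) {Q : Ideal (MvPolynomial (Fin m) R)}
    (hQ : ∀ s t : Fin m →₀ ℕ, s.degree = t.degree → weight e s ≤ weight e t →
      reesBinomial a b e s t ∈ Q) :
    presKer (fun i ↦ a ^ e i * b ^ f i) ≤ Q := by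
  intro F hF
  rw [← sum_homogeneousComponent F]
  refine sum_mem fun n _ ↦ mem_of_reesBinomial_mem_of_isHomogeneous h hef hi₀
    (fun s t hs ht ↦ hQ s t (hs.trans ht.symm)) (homogeneousComponent_isHomogeneous n F)
    (mem_presKer_iff.mp hF n)

lemma reesBinomial_mem_presKerLe (hef : ∀ i, e i + f i = p)
    (hlink : ∀ s t : Fin m →₀ ℕ, N < s.degree → s.degree = t.degree → weight e s ≤ weight e t →
      ∃ u : Fin m →₀ ℕ, u.degree = s.degree ∧ weight e s ≤ weight e u ∧ weight e u ≤ weight e t ∧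
        (∃ i, s i ≠ 0 ∧ u i ≠ 0) ∧ ∃ i, u i ≠ 0 ∧ t i ≠ 0)
    (s t : Fin m →₀ ℕ) (hst : s.degree = t.degree) (hle : weight e s ≤ weight e t) :
    reesBinomial a b e s t ∈ presKerLe (fun i ↦ a ^ e i * b ^ f i) N := by
  induction hn : s.degree generalizing s t with
  | zero =>
    exact mem_presKerLe_of_isHomogeneous (isHomogeneous_reesBinomial rfl hst.symm)
      (hn.trans_le N.zero_le) (eval_reesBinomial hef hst hle)
  | succ n ih =>
    rcases le_or_gt s.degree N with hN | hN
    · exact mem_presKerLe_of_isHomogeneous (isHomogeneous_reesBinomial rfl hst.symm) hN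
        (eval_reesBinomial hef hst hle)
    have of_common {s t : Fin m →₀ ℕ} (hs : s.degree = n + 1) (ht : t.degree = n + 1)
        (hle : weight e s ≤ weight e t) (hcommon : ∃ i, s i ≠ 0 ∧ t i ≠ 0) :
        reesBinomial a b e s t ∈ presKerLe (fun i ↦ a ^ e i * b ^ f i) N := by
      obtain ⟨i, hsi, hti⟩ := hcommon
      obtain ⟨s, rfl⟩ := exists_add_of_le
        (Finsupp.single_le_iff.mpr (Nat.one_le_iff_ne_zero.mpr hsi))
      obtain ⟨t, rfl⟩ := exists_add_of_le
        (Finsupp.single_le_iff.mpr (Nat.one_le_iff_ne_zero.mpr hti))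
      rw [map_add, Finsupp.degree_single] at hs ht
      rw [map_add, map_add, add_le_add_iff_left] at hle
      rw [reesBinomial_add_left]
      exact Ideal.mul_mem_left _ _ (ih s t (by omega) hle (by omega))
    obtain ⟨u, hu, hsu, hut, hcommon, hcommon'⟩ := hlink s t hN hst hle
    rw [reesBinomial_eq_add a b hsu hut]
    exact add_mem (Ideal.mul_mem_left _ _ (of_common hn (hu.trans hn) hsu hcommon))
      (Ideal.mul_mem_left _ _ (of_common (hu.trans hn) (hst.symm.trans hn) hut hcommon'))

lemma presKerLe_le_map_C (h : IsWeaklyRegular R [a, b]) (hef : ∀ i, e i + f i = p)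
    (hinj : ∀ n ≤ N, Set.InjOn (weight e) {s | s.degree = n}) :
    presKerLe (fun i ↦ a ^ e i * b ^ f i) N ≤ (Ideal.span {a, b}).map C := by
  refine Ideal.span_le.mpr ?_
  rintro F ⟨hF, n, hn, hhom⟩
  exact mem_map_C_iff.mpr (coeff_mem_span_pair_of_eval_eq_zero h hef hhom (hinj n hn)
    ((mem_presKer_iff_of_isHomogeneous hhom).mp hF))

lemma eq_top_of_presKer_le_map_C (hef : ∀ i, e i + f i = p) {s t : Fin m →₀ ℕ} (hne : s ≠ t)
    (hdegree : s.degree = t.degree) (hweight : weight e s = weight e t) {K : Ideal R}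
    (hK : presKer (fun i ↦ a ^ e i * b ^ f i) ≤ K.map C) : K = ⊤ := by
  have hker : reesBinomial a b e s t ∈ presKer (fun i ↦ a ^ e i * b ^ f i) :=
    (mem_presKer_iff_of_isHomogeneous (isHomogeneous_reesBinomial rfl hdegree.symm)).mpr
      (eval_reesBinomial hef hdegree hweight.le)
  have hcoeff : coeff s (reesBinomial a b e s t) = 1 := by
    rw [reesBinomial, hweight, Nat.sub_self, coeff_sub, coeff_monomial, coeff_monomial, if_pos rfl,
      if_neg hne.symm, pow_zero, sub_zero]
  rw [Ideal.eq_top_iff_one, ← hcoeff]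
  exact mem_map_C_iff.mp (hK hker) s

variable {c d : ℕ}

lemma weight_triple (c d : ℕ) (s : Fin 3 →₀ ℕ) :
    weight ![c + d, 0, c] s = (c + d) * s 0 + c * s 2 := by
  simp [Finsupp.weight_eq_sum, Fin.sum_univ_three, mul_comm]

lemma degree_fin_three (s : Fin 3 →₀ ℕ) : s.degree = s 0 + s 1 + s 2 := by
  rw [Finsupp.degree_eq_sum, Fin.sum_univ_three]

lemma injOn_weight_triple {n : ℕ} (hcd : c.Coprime d) (hn : n < c + d) :
    Set.InjOn (weight ![c + d, 0, c]) {s : Fin 3 →₀ ℕ | s.degree = n} := by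
  intro s hs t ht hst
  simp only [Set.mem_ofPred_eq, degree_fin_three] at hs ht
  simp only [weight_triple] at hst
  have hmod : s 2 ≡ t 2 [MOD c + d] := by
    refine Nat.ModEq.cancel_left_of_coprime (c := c) (by simpa using hcd.symm) ?_
    simpa [Nat.ModEq] using congr_arg (· % (c + d)) hst
  have h₂ : s 2 = t 2 := hmod.eq_of_lt_of_lt (by omega) (by omega)
  have h₀ : s 0 = t 0 :=
    Nat.eq_of_mul_eq_mul_left (by omega) (Nat.add_right_cancel (h₂ ▸ hst))
  ext i
  fin_cases i
  exacts [h₀, by simp; omega, h₂]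

lemma exists_linking_exponents (hc : 0 < c) (hd : 0 < d) {s₀ s₁ s₂ t₀ t₁ t₂ : ℕ}
    (hs : c + d < s₀ + s₁ + s₂) (hst : s₀ + s₁ + s₂ = t₀ + t₁ + t₂)
    (hle : (c + d) * s₀ + c * s₂ ≤ (c + d) * t₀ + c * t₂) :
    ∃ u₀ u₁ u₂, u₀ + u₁ + u₂ = s₀ + s₁ + s₂ ∧
      (c + d) * s₀ + c * s₂ ≤ (c + d) * u₀ + c * u₂ ∧
      (c + d) * u₀ + c * u₂ ≤ (c + d) * t₀ + c * t₂ ∧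
      (s₀ ≠ 0 ∧ u₀ ≠ 0 ∨ s₁ ≠ 0 ∧ u₁ ≠ 0 ∨ s₂ ≠ 0 ∧ u₂ ≠ 0) ∧
      (u₀ ≠ 0 ∧ t₀ ≠ 0 ∨ u₁ ≠ 0 ∧ t₁ ≠ 0 ∨ u₂ ≠ 0 ∧ t₂ ≠ 0) := by
  by_cases hcommon : s₀ ≠ 0 ∧ t₀ ≠ 0 ∨ s₁ ≠ 0 ∧ t₁ ≠ 0 ∨ s₂ ≠ 0 ∧ t₂ ≠ 0
  · exact ⟨s₀, s₁, s₂, rfl, le_rfl, hle, by omega, hcommon⟩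
  by_cases hY : s₀ = 0 ∧ s₁ = 0 ∨ t₀ = 0 ∧ t₁ = 0
  · obtain ⟨k, hk⟩ := Nat.exists_eq_add_of_lt hs
    refine ⟨c, d, k + 1, by omega, ?_, ?_, by omega, by omega⟩
    · rcases hY with ⟨rfl, rfl⟩ | ⟨rfl, rfl⟩ <;> nlinarith
    · rcases hY with ⟨rfl, rfl⟩ | ⟨rfl, rfl⟩ <;> nlinarith
  obtain rfl : s₀ = 0 := by
    by_contra hs₀
    obtain ⟨rfl, rfl⟩ : s₁ = 0 ∧ t₀ = 0 := by omega
    rcases Nat.eq_zero_or_pos s₂ with rfl | hs₂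
    · nlinarith
    · obtain rfl : t₂ = 0 := by omega
      nlinarith
  obtain rfl : t₁ = 0 := by omega
  rcases Nat.eq_zero_or_pos s₂ with rfl | hs₂
  · exact ⟨1, s₁ - 1, 0, by omega, by nlinarith, by nlinarith, by omega, by omega⟩
  · obtain rfl : t₂ = 0 := by omega
    obtain ⟨k, rfl⟩ : ∃ k, t₀ = k + 1 := ⟨t₀ - 1, by omega⟩
    exact ⟨k, 1, 0, by omega, by nlinarith, by linarith, by omega, by omega⟩

lemma exists_linking_triple (hc : 0 < c) (hd : 0 < d) (s t : Fin 3 →₀ ℕ) (hs : c + d < s.degree)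
    (hst : s.degree = t.degree) (hle : weight ![c + d, 0, c] s ≤ weight ![c + d, 0, c] t) :
    ∃ u : Fin 3 →₀ ℕ, u.degree = s.degree ∧
      weight ![c + d, 0, c] s ≤ weight ![c + d, 0, c] u ∧
      weight ![c + d, 0, c] u ≤ weight ![c + d, 0, c] t ∧
        (∃ i, s i ≠ 0 ∧ u i ≠ 0) ∧ ∃ i, u i ≠ 0 ∧ t i ≠ 0 := by
  simp only [weight_triple, degree_fin_three, Fin.exists_fin_succ, Fin.exists_fin_zero]
    at hs hst hle ⊢
  obtain ⟨u₀, u₁, u₂, hu⟩ := exists_linking_exponents hc hd hs hst hle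
  exact ⟨Finsupp.equivFunOnFinite.symm ![u₀, u₁, u₂], by simpa using hu⟩

lemma isLeast_relationType (h : IsRegular R [a, b]) (hcd : c.Coprime d) (hc : 0 < c)
    (hd : 0 < d) :
    IsLeast {N : ℕ | 1 ≤ N ∧ presKer ![a ^ (c + d), b ^ (c + d), a ^ c * b ^ d]
      = presKerLe ![a ^ (c + d), b ^ (c + d), a ^ c * b ^ d] N} (c + d) := by
  set e : Fin 3 → ℕ := ![c + d, 0, c] with he
  set f : Fin 3 → ℕ := ![0, c + d, d] with hf
  have hef (i : Fin 3) : e i + f i = c + d := by fin_cases i <;> simp [he, hf]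
  have hg : ![a ^ (c + d), b ^ (c + d), a ^ c * b ^ d] = fun i ↦ a ^ e i * b ^ f i := by
    ext i
    fin_cases i <;> simp [he, hf]
  rw [hg]
  refine ⟨⟨by omega, le_antisymm ?_ (presKerLe_le_presKer _ _)⟩, fun N ⟨_, hN⟩ ↦ ?_⟩
  · exact presKer_le_of_reesBinomial_mem h.toIsWeaklyRegular hef (i₀ := 0) rfl
      (reesBinomial_mem_presKerLe hef (exists_linking_triple hc hd))
  · by_contra! hlt
    refine span_pair_ne_top_of_isRegular h (eq_top_of_presKer_le_map_C hef
      (s := Finsupp.single 2 (c + d)) (t := Finsupp.single 0 c + Finsupp.single 1 d) ?_ ?_ ?_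
      (hN.trans_le (presKerLe_le_map_C h.toIsWeaklyRegular hef
        fun n hn ↦ injOn_weight_triple hcd (hn.trans_lt hlt))))
    · exact fun heq ↦ hc.ne (by simpa using DFunLike.congr_fun heq 0)
    · simp [degree_fin_three]
    · simp [he, weight_triple, mul_comm]

end RelationType

theorem statement8_general {R : Type*} [CommRing R]
    (a b : R) (hreg : RingTheory.Sequence.IsRegular R [a, b])
    (p : ℕ) (hp : 3 ≤ p) (hodd : Odd p)
    (J I : Ideal R)
    (hJ : J = Ideal.span {a ^ p, b ^ p})
    (hI : I = Ideal.span {a ^ p, b ^ p, a ^ 2 * b ^ (p - 2)}) :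
    ((∀ n : ℕ, n ≤ (p - 3) / 2 →
        (J * I ^ n).colon (Ideal.span {(a ^ 2 * b ^ (p - 2)) ^ (n + 1)})
          = Ideal.span {a ^ (p - 2 * n - 2), b ^ 2}) ∧
      (∀ n : ℕ, (p - 1) / 2 ≤ n → n ≤ p - 2 →
        (J * I ^ n).colon (Ideal.span {(a ^ 2 * b ^ (p - 2)) ^ (n + 1)})
          = Ideal.span {a, b}) ∧
      (∀ n : ℕ, p - 1 ≤ n →
        (J * I ^ n).colon (Ideal.span {(a ^ 2 * b ^ (p - 2)) ^ (n + 1)}) = ⊤) ∧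
      IsLeast {k : ℕ | I ^ (k + 1) = J * I ^ k} (p - 1)) ∧
    (∀ n : ℕ, 2 ≤ n →
      (Ideal.span {a ^ p} * I ^ (n - 1)).colon (Ideal.span {b ^ p}) ⊓ I ^ (n - 1)
        = Ideal.span {a ^ p} * I ^ (n - 2)) ∧
    IsLeast {N : ℕ | 1 ≤ N ∧
      presKer ![a ^ p, b ^ p, a ^ 2 * b ^ (p - 2)]
        = presKerLe ![a ^ p, b ^ p, a ^ 2 * b ^ (p - 2)] N} p := by
  obtain ⟨q, rfl⟩ : ∃ q, p = 2 + (2 * q + 1) := by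
    obtain ⟨k, rfl⟩ := hodd
    exact ⟨k - 1, by omega⟩
  rw [Nat.add_sub_cancel_left] at hI ⊢
  subst hJ hI
  have hcoprime : Nat.Coprime 2 (2 * q + 1) := by simp
  refine ⟨⟨fun n hn ↦ ?_, fun n hn hn' ↦ ?_, fun n hn ↦ ?_, ?_⟩, fun n hn ↦ ?_, ?_⟩
  · rw [colon_pow_eq_span_pow_pair hreg.toIsWeaklyRegular (by omega),
      show 2 + (2 * q + 1) - 2 * n - 2 = 2 * q + 1 - 2 * n by omega]
  · exact le_antisymm (colon_pow_le_span_pair hreg.toIsWeaklyRegular hcoprime (by omega))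
      (span_pair_le_colon_pow (i := 1) (j := q) (i' := 1) (j' := q + 1) (by omega) (by omega)
        (by omega) (by omega))
  · rw [Ideal.eq_top_iff_one, Ideal.mem_colon_span_singleton, one_mul]
    exact pow_mem_span_pair_mul_span_triple_pow (by omega) (by omega)
  · exact isLeast_reductionNumber hreg hcoprime
  · obtain ⟨n, rfl⟩ := Nat.exists_eq_add_of_le' hn
    exact colon_inf_span_triple_pow_eq hreg.toIsWeaklyRegular
  · exact isLeast_relationType hreg hcoprime two_pos (by omega)

/-- Let `a,b` be a regular sequence in a Noetherian local ring, `p ≥ 5` odd,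
`x₁ = aᵖ`, `x₂ = bᵖ`, `y = a²bᵖ⁻²`, `J = (x₁,x₂)`, `I = (x₁,x₂,y)`.  Then the colon
ideals `(JIⁿ : yⁿ⁺¹)` are as described (in particular `J` is a reduction of `I` with
reduction number `p − 1`), `((x₁Iⁿ⁻¹ : x₂) ∩ Iⁿ⁻¹)/(x₁Iⁿ⁻²) = 0` for all `n ≥ 2`,
and `rt(I) = p`. -/
theorem statement8 {R : Type*} [CommRing R] [IsNoetherianRing R] [IsLocalRing R]
    (a b : R) (hreg : RingTheory.Sequence.IsRegular R [a, b])
    (p : ℕ) (hp : 5 ≤ p) (hodd : Odd p)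
    (J I : Ideal R)
    (hJ : J = Ideal.span {a ^ p, b ^ p})
    (hI : I = Ideal.span {a ^ p, b ^ p, a ^ 2 * b ^ (p - 2)}) :
    -- (i)
    ((∀ n : ℕ, 1 ≤ n → n ≤ (p - 3) / 2 →
        (J * I ^ n).colon (Ideal.span {(a ^ 2 * b ^ (p - 2)) ^ (n + 1)})
          = Ideal.span {a ^ (p - 2 * n - 2), b ^ 2}) ∧
      (∀ n : ℕ, (p - 1) / 2 ≤ n → n ≤ p - 2 →
        (J * I ^ n).colon (Ideal.span {(a ^ 2 * b ^ (p - 2)) ^ (n + 1)})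
          = Ideal.span {a, b}) ∧
      (∀ n : ℕ, p - 1 ≤ n →
        (J * I ^ n).colon (Ideal.span {(a ^ 2 * b ^ (p - 2)) ^ (n + 1)}) = ⊤) ∧
      IsLeast {k : ℕ | I ^ (k + 1) = J * I ^ k} (p - 1)) ∧
    -- (ii)
    (∀ n : ℕ, 2 ≤ n →
      (Ideal.span {a ^ p} * I ^ (n - 1)).colon (Ideal.span {b ^ p}) ⊓ I ^ (n - 1)
        = Ideal.span {a ^ p} * I ^ (n - 2)) ∧
    -- (iii)
    IsLeast {N : ℕ | 1 ≤ N ∧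
      presKer ![a ^ p, b ^ p, a ^ 2 * b ^ (p - 2)]
        = presKerLe ![a ^ p, b ^ p, a ^ 2 * b ^ (p - 2)] N} p := by
  obtain ⟨⟨hsmall, hrest⟩, h⟩ := statement8_general a b hreg p (by omega) hodd J I hJ hI
  exact ⟨⟨fun n _ ↦ hsmall n, hrest⟩, h⟩
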